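/- Under condition H1, if (ρ_t)_{t∈(0,1]} and ρ are Borel probability measures on ℝ whose characteristic functions equal exp(ψ_{α,t}(λ)) and exp(ψ_{α,C±}(λ)) respectively (for all λ ∈ ℝ), then ρ_t converges weakly to ρ as t → 0+. -/

import Mathlib

open MeasureTheory Real Filter Set Topology

/-- The `α`-stable Lévy density with constants `Cp` (for `u > 0`) and `Cm` (for `u < 0`). -/
noncomputable def stableDensity (α Cp Cm : ℝ) (u : ℝ) : ℝ :=
  if 0 < u then Cp * |u| ^ (-α - 1) else Cm * |u| ^ (-α - 1)

/-- The characteristic exponent `ψ_{α,t}(λ)` of the rescaled locally stable process. -/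
noncomputable def psiT (m : ℝ → ℝ) (α t lam : ℝ) : ℂ :=
  (t : ℂ) * ∫ u : ℝ,
    (Complex.exp (Complex.I * ((lam * t ^ (-1 / α) * u : ℝ) : ℂ)) - 1 -
      Complex.I * ((lam * t ^ (-1 / α) * u : ℝ) : ℂ) *
        (if |u| ≤ t ^ (1 / α) then (1 : ℂ) else 0)) * ((m u : ℝ) : ℂ)

/-- The limiting `α`-stable characteristic exponent `ψ_{α,C±}(λ)`. -/
noncomputable def psiLimit (α Cp Cm lam : ℝ) : ℂ :=
  ∫ v : ℝ,
    (Complex.exp (Complex.I * ((lam * v : ℝ) : ℂ)) - 1 -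
      Complex.I * ((lam * v : ℝ) : ℂ) * (if |v| ≤ 1 then (1 : ℂ) else 0)) *
      ((stableDensity α Cp Cm v : ℝ) : ℂ)


noncomputable def gK (lam v : ℝ) : ℂ :=
  Complex.exp (Complex.I * ((lam * v : ℝ) : ℂ)) - 1 -
      Complex.I * ((lam * v : ℝ) : ℂ) * (if |v| ≤ 1 then (1 : ℂ) else 0)

lemma gK_meas (lam : ℝ) : Measurable (gK lam) := by
  unfold gK
  refine Measurable.sub (by fun_prop) (Measurable.mul (by fun_prop) ?_)
  exact Measurable.ite (measurableSet_le (by fun_prop) (by fun_prop)) measurable_const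
    measurable_const

lemma gK_bound (lam v : ℝ) : ‖gK lam v‖ ≤ (2 + 3 * lam ^ 2) * min 1 (v ^ 2) := by
  unfold gK
  have h1 := Complex.norm_exp_I_mul_ofReal (lam * v)
  have hn : ‖Complex.I * ((lam * v : ℝ) : ℂ)‖ = |lam * v| := by
    rw [norm_mul, Complex.norm_I, one_mul, Complex.norm_real, Real.norm_eq_abs]
  split_ifs with h
  · have hv : v ^ 2 ≤ 1 := by
      rw [← sq_abs]; have := abs_nonneg v; nlinarith
    rw [min_eq_right hv, mul_one]
    have key : ‖Complex.exp (Complex.I * ((lam * v : ℝ) : ℂ)) - 1 -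
        Complex.I * ((lam * v : ℝ) : ℂ)‖ ≤ 3 * (lam * v) ^ 2 := by
      rw [← sq_abs (lam * v)]
      by_cases hx : |lam * v| ≤ 1
      · have := Complex.norm_exp_sub_one_sub_id_le (x := Complex.I * ((lam * v : ℝ) : ℂ))
          (by rw [hn]; exact hx)
        rw [hn] at this
        nlinarith [sq_nonneg (|lam * v|)]
      · have a := norm_sub_le (Complex.exp (Complex.I * ((lam * v : ℝ) : ℂ)) - 1)
          (Complex.I * ((lam * v : ℝ) : ℂ))
        have b := norm_sub_le (Complex.exp (Complex.I * ((lam * v : ℝ) : ℂ))) 1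
        rw [h1, norm_one] at b
        rw [hn] at a
        push Not at hx
        nlinarith
    nlinarith [sq_nonneg v]
  · have hv : 1 ≤ v ^ 2 := by
      rw [← sq_abs]; push Not at h; nlinarith
    rw [min_eq_left hv, mul_one, mul_zero, sub_zero]
    have b := norm_sub_le (Complex.exp (Complex.I * ((lam * v : ℝ) : ℂ))) 1
    rw [h1, norm_one] at b
    nlinarith [sq_nonneg lam]

lemma bound_int (α : ℝ) (hα : α ∈ Set.Ioo (0 : ℝ) 2) :
    Integrable (fun v : ℝ => min 1 (v ^ 2) * |v| ^ (-α - 1)) := by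
  have := (integrable_fun_norm_addHaar (volume : Measure ℝ)
    (f := fun y : ℝ => min 1 (y ^ 2) * y ^ (-α - 1))).2 ?_
  · simpa using this
  · simp only [Module.finrank_self, Nat.sub_self, pow_zero, one_smul]
    rw [← Ioc_union_Ioi_eq_Ioi (zero_le_one' ℝ)]
    refine IntegrableOn.union ?_ ?_
    · have h := (intervalIntegral.intervalIntegrable_rpow' (a := 0) (b := 1) (r := 1 - α)
        (by linarith [hα.2])).1
      refine h.congr_fun (fun y hy => ?_) measurableSet_Ioc
      have : y ^ 2 ≤ 1 := by nlinarith [hy.1, hy.2]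
      simp only
      rw [min_eq_right this, ← Real.rpow_natCast, ← Real.rpow_add hy.1]
      congr 1; push_cast; ring
    · refine (integrableOn_Ioi_rpow_of_lt (a := -α - 1) (by linarith [hα.1])
        one_pos).congr_fun (fun y hy => ?_) measurableSet_Ioi
      have hy : 1 < y := hy
      have : 1 ≤ y ^ 2 := by nlinarith
      simp only
      rw [min_eq_left this, one_mul]

lemma psiT_eq (m : ℝ → ℝ) (α t lam : ℝ) (ht : 0 < t) :
    psiT m α t lam = (t : ℂ) * ∫ u : ℝ, gK lam ((t ^ (1 / α))⁻¹ * u) * ((m u : ℝ) : ℂ) := by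
  unfold psiT gK
  have hs : 0 < t ^ (1 / α) := Real.rpow_pos_of_pos ht _
  have e : t ^ (-1 / α) = (t ^ (1 / α))⁻¹ := by rw [neg_div, Real.rpow_neg ht.le]
  congr 1
  refine integral_congr_ae (Eventually.of_forall fun u => ?_)
  have h : (|u| ≤ t ^ (1 / α)) ↔ |(t ^ (1 / α))⁻¹ * u| ≤ 1 := by
    rw [abs_mul, abs_of_pos (inv_pos.2 hs), inv_mul_le_iff₀ hs, mul_one]
  simp only [e, h, mul_assoc]

lemma scale_id (α t v x : ℝ) (hα : 0 < α) (ht : 0 < t) (hv : v ≠ 0) :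
    t * t ^ (1 / α) * x = |v| ^ (-α - 1) * (|t ^ (1 / α) * v| ^ (α + 1) * x) := by
  have hs : 0 < t ^ (1 / α) := Real.rpow_pos_of_pos ht _
  have hv' : 0 < |v| := abs_pos.2 hv
  have h1 : (t ^ (1 / α)) ^ (α + 1) = t * t ^ (1 / α) := by
    rw [Real.rpow_add hs, Real.rpow_one, ← Real.rpow_mul ht.le, one_div_mul_cancel hα.ne',
      Real.rpow_one]
  have h2 : |v| ^ (-α - 1) * |v| ^ (α + 1) = 1 := by
    rw [← Real.rpow_add hv']; simp
  rw [abs_mul, abs_of_pos hs, Real.mul_rpow hs.le hv'.le, h1]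
  linear_combination (-(t * t ^ (1 / α) * x)) * h2

lemma psi_tendsto (α Cp Cm : ℝ) (hα : α ∈ Set.Ioo (0 : ℝ) 2)
    (m : ℝ → ℝ) (hm_meas : Measurable m) (hm_nonneg : ∀ u, 0 ≤ m u)
    (hm_int : Integrable (fun u => min 1 (u ^ 2) * m u))
    (hlimp : Tendsto (fun u => u ^ (α + 1) * m u) (𝓝[>] (0 : ℝ)) (𝓝 Cp))
    (hlimm : Tendsto (fun u => |u| ^ (α + 1) * m u) (𝓝[<] (0 : ℝ)) (𝓝 Cm)) (lam : ℝ) :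
    Tendsto (fun t => psiT m α t lam) (𝓝[Set.Ioc (0 : ℝ) 1] 0) (𝓝 (psiLimit α Cp Cm lam)) := by
  have hα0 := hα.1
  have hlimp' : Tendsto (fun u => |u| ^ (α + 1) * m u) (𝓝[>] (0 : ℝ)) (𝓝 Cp) := by
    refine hlimp.congr' ?_
    filter_upwards [self_mem_nhdsWithin] with u hu
    rw [abs_of_pos hu]
  -- choose δ
  obtain ⟨δ, hδ0, hδ1, M, hM⟩ : ∃ δ : ℝ, 0 < δ ∧ δ ≤ 1 ∧ ∃ M : ℝ,
      ∀ u, u ≠ 0 → |u| ≤ δ → |u| ^ (α + 1) * m u ≤ M := by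
    have a := hlimp'.eventually (eventually_le_nhds (lt_add_one Cp))
    have b := hlimm.eventually (eventually_le_nhds (lt_add_one Cm))
    obtain ⟨x, hx, hx'⟩ := mem_nhdsGT_iff_exists_Ioc_subset.1 a
    obtain ⟨y, hy, hy'⟩ := mem_nhdsLT_iff_exists_Ico_subset.1 b
    have hx : 0 < x := hx
    have hy : y < 0 := hy
    refine ⟨min 1 (min x (-y)), by simp [hx, hy], min_le_left _ _,
      max (Cp + 1) (Cm + 1), fun u hu hu' => ?_⟩
    have h1 : |u| ≤ x := hu'.trans ((min_le_right _ _).trans (min_le_left _ _))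
    have h2 : |u| ≤ -y := hu'.trans ((min_le_right _ _).trans (min_le_right _ _))
    rcases lt_or_gt_of_ne hu with h | h
    · exact le_max_of_le_right (hy' ⟨by rw [abs_of_neg h] at h2; linarith, h⟩)
    · exact le_max_of_le_left (hx' ⟨h, by rwa [abs_of_pos h] at h1⟩)
  set A : Set ℝ := {u | |u| ≤ δ} with hA
  have hAm : MeasurableSet A := measurableSet_le (by fun_prop) (by fun_prop)
  set m1 : ℝ → ℝ := A.indicator m with hm1
  have hm1m : Measurable m1 := hm_meas.indicator hAm
  set K : ℝ := 2 + 3 * lam ^ 2 with hK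
  have hK0 : 0 ≤ K := by positivity
  set l := 𝓝[Set.Ioc (0 : ℝ) 1] 0 with hl
  have hmem : ∀ᶠ t in l, t ∈ Set.Ioc (0 : ℝ) 1 := self_mem_nhdsWithin
  have ht0 : Tendsto (fun t : ℝ => t) l (𝓝 0) := tendsto_id.mono_left nhdsWithin_le_nhds
  have hs0 : Tendsto (fun t : ℝ => t ^ (1 / α)) l (𝓝 0) := by
    have := (Real.continuousAt_rpow_const 0 (1 / α) (Or.inr (by positivity))).tendsto
    rw [Real.zero_rpow (by positivity)] at this
    exact this.comp ht0
  -- the inner part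
  have inner : Tendsto (fun t : ℝ => ∫ v : ℝ, gK lam v *
      ((t * t ^ (1 / α) * m1 (t ^ (1 / α) * v) : ℝ) : ℂ)) l (𝓝 (psiLimit α Cp Cm lam)) := by
    unfold psiLimit
    refine tendsto_integral_filter_of_dominated_convergence
      (fun v => K * max M 0 * (min 1 (v ^ 2) * |v| ^ (-α - 1))) ?_ ?_
      ((bound_int α hα).const_mul _) ?_
    · refine Eventually.of_forall fun t => ?_
      refine ((gK_meas lam).mul (Complex.measurable_ofReal.comp ?_)).aestronglyMeasurable
      exact (hm1m.comp (measurable_const_mul _)).const_mul _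
    · filter_upwards [hmem] with t ht
      filter_upwards [Measure.ae_ne volume (0 : ℝ)] with v hv
      have hs : 0 < t ^ (1 / α) := Real.rpow_pos_of_pos ht.1 _
      rw [norm_mul, Complex.norm_real, Real.norm_eq_abs, scale_id α t v _ hα0 ht.1 hv]
      have hm1n : 0 ≤ m1 (t ^ (1 / α) * v) := Set.indicator_nonneg (fun u _ => hm_nonneg u) _
      have hle : |t ^ (1 / α) * v| ^ (α + 1) * m1 (t ^ (1 / α) * v) ≤ max M 0 := by
        by_cases h : t ^ (1 / α) * v ∈ A
        · rw [hm1, Set.indicator_of_mem h]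
          exact le_max_of_le_left (hM _ (mul_ne_zero hs.ne' hv) h)
        · rw [hm1, Set.indicator_of_notMem h]; simp
      rw [abs_of_nonneg (by positivity)]
      calc _ ≤ (K * min 1 (v ^ 2)) * (|v| ^ (-α - 1) * max M 0) := by
            gcongr
            exact gK_bound lam v
        _ = _ := by ring
    · filter_upwards [Measure.ae_ne volume (0 : ℝ)] with v hv
      refine Tendsto.const_mul (gK lam v) ?_
      refine (Complex.continuous_ofReal.tendsto _).comp ?_
      have hsv : Tendsto (fun t : ℝ => t ^ (1 / α) * v) l (𝓝 0) := by
        simpa using hs0.mul_const v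
      have hin : ∀ᶠ t in l, t ^ (1 / α) * v ∈ A := by
        have := hsv.abs
        rw [abs_zero] at this
        exact this.eventually (eventually_le_nhds hδ0)
      have hmain : Tendsto (fun t : ℝ => |v| ^ (-α - 1) *
          (|t ^ (1 / α) * v| ^ (α + 1) * m (t ^ (1 / α) * v))) l
          (𝓝 (stableDensity α Cp Cm v)) := by
        unfold stableDensity
        split_ifs with h
        · rw [mul_comm Cp]
          refine Tendsto.const_mul _ (hlimp'.comp (tendsto_nhdsWithin_iff.2 ⟨hsv, ?_⟩))
          filter_upwards [hmem] with t ht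
          exact mul_pos (Real.rpow_pos_of_pos ht.1 _) h
        · rw [mul_comm Cm]
          refine Tendsto.const_mul _ (hlimm.comp (tendsto_nhdsWithin_iff.2 ⟨hsv, ?_⟩))
          filter_upwards [hmem] with t ht
          exact mul_neg_of_pos_of_neg (Real.rpow_pos_of_pos ht.1 _)
            (lt_of_le_of_ne (not_lt.1 h) hv)
      refine hmain.congr' ?_
      filter_upwards [hmem, hin] with t ht h
      rw [hm1, Set.indicator_of_mem h, scale_id α t v _ hα0 ht.1 hv]
  -- outer part
  have hAc : ∀ u ∈ Aᶜ, m u ≤ (δ ^ 2)⁻¹ * (min 1 (u ^ 2) * m u) := by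
    intro u hu
    have hu : δ < |u| := not_le.1 hu
    have h1 : δ ^ 2 ≤ min 1 (u ^ 2) := by
      refine le_min (by nlinarith) ?_
      rw [← sq_abs u]; nlinarith
    rw [← mul_assoc]
    refine le_mul_of_one_le_left (hm_nonneg u) ?_
    rw [le_inv_mul_iff₀ (by positivity), mul_one]; exact h1
  have hnorm : ∀ t u, ‖gK lam ((t ^ (1 / α))⁻¹ * u) * ((Aᶜ.indicator m u : ℝ) : ℂ)‖ ≤
      K * (δ ^ 2)⁻¹ * (min 1 (u ^ 2) * m u) := by
    intro t u
    have hmu := hm_nonneg u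
    by_cases h : u ∈ Aᶜ
    · rw [Set.indicator_of_mem h, norm_mul, Complex.norm_real, Real.norm_of_nonneg hmu, mul_assoc]
      refine mul_le_mul ((gK_bound _ _).trans ?_) (hAc u h) hmu hK0
      exact mul_le_of_le_one_right hK0 (min_le_left _ _)
    · rw [Set.indicator_of_notMem h]; simp; positivity
  have outer : Tendsto (fun t : ℝ => (t : ℂ) * ∫ u : ℝ, gK lam ((t ^ (1 / α))⁻¹ * u) *
      ((Aᶜ.indicator m u : ℝ) : ℂ)) l (𝓝 0) := by
    refine squeeze_zero_norm' (a := fun t : ℝ => t *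
      ∫ u : ℝ, K * (δ ^ 2)⁻¹ * (min 1 (u ^ 2) * m u)) ?_ (by simpa using ht0.mul_const _)
    filter_upwards [hmem] with t ht
    rw [norm_mul, Complex.norm_real, Real.norm_of_nonneg ht.1.le]
    refine mul_le_mul_of_nonneg_left ?_ ht.1.le
    exact norm_integral_le_of_norm_le (hm_int.const_mul _) (Eventually.of_forall (hnorm t))
  have tot := inner.add outer
  rw [add_zero] at tot
  refine tot.congr' ?_
  filter_upwards [hmem] with t ht
  have hs : 0 < t ^ (1 / α) := Real.rpow_pos_of_pos ht.1 _
  have hs1 : t ^ (1 / α) ≤ 1 := Real.rpow_le_one ht.1.le ht.2 (by positivity)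
  rw [psiT_eq m α t lam ht.1]
  set s := t ^ (1 / α) with hsdef
  have gm : Measurable (fun u => gK lam (s⁻¹ * u)) :=
    (gK_meas lam).comp (measurable_const_mul _)
  have i2 : Integrable (fun u => gK lam (s⁻¹ * u) * ((Aᶜ.indicator m u : ℝ) : ℂ)) :=
    (hm_int.const_mul (K * (δ ^ 2)⁻¹)).mono'
      (gm.mul (Complex.measurable_ofReal.comp
        (hm_meas.indicator hAm.compl))).aestronglyMeasurable (Eventually.of_forall (hnorm t))
  have i1 : Integrable (fun u => gK lam (s⁻¹ * u) * ((m1 u : ℝ) : ℂ)) := by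
    refine (hm_int.const_mul (K * (s ^ 2)⁻¹)).mono'
      (gm.mul (Complex.measurable_ofReal.comp hm1m)).aestronglyMeasurable
      (Eventually.of_forall fun u => ?_)
    have hmu := hm_nonneg u
    have h1 : m1 u ≤ m u := Set.indicator_le_self' (fun _ _ => hmu) _
    have h0 : 0 ≤ m1 u := Set.indicator_nonneg (fun u _ => hm_nonneg u) _
    rw [norm_mul, Complex.norm_real, Real.norm_of_nonneg h0, ← mul_assoc]
    refine mul_le_mul ((gK_bound _ _).trans ?_) h1 h0 (by positivity)
    rw [← hK, mul_assoc]
    refine mul_le_mul_of_nonneg_left ?_ hK0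
    have hs2 : 1 ≤ (s ^ 2)⁻¹ := (one_le_inv₀ (by positivity)).2 (by nlinarith)
    rw [mul_min_of_nonneg _ _ (by positivity), mul_pow, inv_pow, mul_one]
    exact min_le_min hs2 le_rfl
  have split : ∫ u : ℝ, gK lam (s⁻¹ * u) * ((m u : ℝ) : ℂ) =
      (∫ u : ℝ, gK lam (s⁻¹ * u) * ((m1 u : ℝ) : ℂ)) +
      ∫ u : ℝ, gK lam (s⁻¹ * u) * ((Aᶜ.indicator m u : ℝ) : ℂ) := by
    rw [← integral_add i1 i2]
    refine integral_congr_ae (Eventually.of_forall fun u => ?_)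
    simp only
    rw [← mul_add, ← Complex.ofReal_add, hm1, Set.indicator_self_add_compl_apply]
  rw [split, mul_add]
  congr 1
  have cv := Measure.integral_comp_mul_left
    (fun u => gK lam (s⁻¹ * u) * ((m1 u : ℝ) : ℂ)) s
  have e : ∀ v, gK lam v * ((t * s * m1 (s * v) : ℝ) : ℂ) =
      ((t * s : ℝ) : ℂ) * (gK lam (s⁻¹ * (s * v)) * ((m1 (s * v) : ℝ) : ℂ)) := by
    intro v
    rw [inv_mul_cancel_left₀ hs.ne']; push_cast; ring
  simp only [e]
  rw [integral_const_mul, cv, abs_of_pos (inv_pos.2 hs), Complex.real_smul, ← mul_assoc,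
    ← Complex.ofReal_mul, mul_assoc t, mul_inv_cancel₀ hs.ne', mul_one]

/-- Under condition H1, if `ρ_t` and `ρ` are Borel probability measures on `ℝ` whose
characteristic functions equal `exp (ψ_{α,t} λ)` and `exp (ψ_{α,C±} λ)` respectively, then
`ρ_t` converges weakly to `ρ` as `t → 0+`. -/
theorem statement1 (α Cp Cm : ℝ) (hα : α ∈ Set.Ioo (0 : ℝ) 2)
    (hCp0 : 0 ≤ Cp) (hCm0 : 0 ≤ Cm) (hC : 0 < Cp + Cm)
    (m : ℝ → ℝ) (hm_meas : Measurable m) (hm_nonneg : ∀ u, 0 ≤ m u)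
    (hm_int : Integrable (fun u => min 1 (u ^ 2) * m u))
    (hlimp : Tendsto (fun u => u ^ (α + 1) * m u) (𝓝[>] (0 : ℝ)) (𝓝 Cp))
    (hlimm : Tendsto (fun u => |u| ^ (α + 1) * m u) (𝓝[<] (0 : ℝ)) (𝓝 Cm))
    (ρt : ℝ → ProbabilityMeasure ℝ) (ρ : ProbabilityMeasure ℝ)
    (hρt : ∀ t ∈ Set.Ioc (0 : ℝ) 1, ∀ lam : ℝ,
      (∫ x : ℝ, Complex.exp (Complex.I * ((lam * x : ℝ) : ℂ)) ∂(ρt t : Measure ℝ))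
        = Complex.exp (psiT m α t lam))
    (hρ : ∀ lam : ℝ,
      (∫ x : ℝ, Complex.exp (Complex.I * ((lam * x : ℝ) : ℂ)) ∂(ρ : Measure ℝ))
        = Complex.exp (psiLimit α Cp Cm lam)) :
    Tendsto ρt (𝓝[Set.Ioc (0 : ℝ) 1] 0) (𝓝 ρ) := by
  refine tendsto_of_seq_tendsto fun x hx => ?_
  refine ProbabilityMeasure.tendsto_iff_tendsto_charFun.2 fun lam => ?_
  have conv : ∀ (μ : Measure ℝ), charFun μ lam =
      ∫ x : ℝ, Complex.exp (Complex.I * ((lam * x : ℝ) : ℂ)) ∂μ := by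
    intro μ
    rw [charFun_apply_real]
    refine integral_congr_ae (Eventually.of_forall fun y => ?_)
    simp only
    congr 1; push_cast; ring
  rw [conv, hρ lam]
  have h := (Complex.continuous_exp.tendsto _).comp
    ((psi_tendsto α Cp Cm hα m hm_meas hm_nonneg hm_int hlimp hlimm lam).comp hx)
  refine h.congr' ?_
  filter_upwards [hx.eventually self_mem_nhdsWithin] with n hn
  simp only [Function.comp_apply]
  rw [conv, hρt _ hn lam]
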